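/- There exists a set 𝒜 of isomorphism classes of finite graphs such that no member of 𝒜 contains a subgraph isomorphic to a different member of 𝒜 (i.e. 𝒜 is an antichain under subgraph containment), and a constant C > 0, such that, writing 𝒜_m for the set of members of 𝒜 with exactly m edges, for all sufficiently large integers m the following hold: exp(m·log m − C·m·log log m) ≤ |𝒜_m| ≤ exp(m·log m + C·m·log log m); every G ∈ 𝒜_m satisfies | |V(G)| − m/log m | ≤ C; and every G ∈ 𝒜_m has minimum degree at least max(1, (log m)/C). -/

import Mathlib

open SimpleGraph Filter Topology

/-- `H` (on `β`) is contained in `G` (on `α`): `G` has a subgraph isomorphic to `H`. -/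
def Contains {α β : Type*} (G : SimpleGraph α) (H : SimpleGraph β) : Prop :=
  ∃ f : β ↪ α, ∀ a b : β, H.Adj a b → G.Adj (f a) (f b)

/-!
Every member of the antichain with `m` edges is homomorphically equivalent to the cycle of odd
length `2 * ⌊√m⌋ + 3` and has maximum degree `(⌊√m⌋ + 2) ^ 2 - m`. If it contains a member with `m'`
edges, then `m' ≤ m`, comparing odd girths gives `⌊√m⌋ ≤ ⌊√m'⌋`, hence equality, and comparing
maximum degrees then gives `m ≤ m'`. As the number of vertices depends only on `m`, a containment
between members is therefore an isomorphism.

Many graphs with these invariants arise as the disjoint union of a blow-up of the cycle, which sets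
the odd girth, and a bipartite graph whose sides consist of `d` blocks of `s` vertices each, with an
arbitrary perfect matching between every two blocks on opposite sides. Some further vertices, joined
to the blocks, adjust the maximum degree and the number of edges. With `n ≈ m / log m` vertices,
`d ≈ 2 * log m` and `2 * d * s ≈ n`, this gives `s! ^ (d ^ 2) = exp (m log m - O(m log log m))`
labelled graphs, and passing to isomorphism classes costs at most a factor `n! ≤ exp m`. The upper
bound already holds for the number of all graphs on `n` labelled vertices with `m` edges.
-/

section Containment

variable {V W : Type*} {G : SimpleGraph V} {H : SimpleGraph W}

theorem contains_iff_isContained : Contains G H ↔ H ⊑ G :=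
  ⟨fun ⟨f, hf⟩ => ⟨⟨f, fun {a b} => hf a b⟩, f.injective⟩,
    fun ⟨f⟩ => ⟨f.toEmbedding, fun _ _ => f.toHom.map_adj⟩⟩

theorem card_edgeSet_le_of_isContained [Finite V] (h : H ⊑ G) :
    Nat.card H.edgeSet ≤ Nat.card G.edgeSet := by
  obtain ⟨f⟩ := h
  exact Nat.card_le_card_of_injective _ f.mapEdgeSet.injective

theorem nonempty_iso_of_isContained_of_card_le [Finite V] (h : H ⊑ G)
    (hV : Nat.card V ≤ Nat.card W) (hE : Nat.card G.edgeSet ≤ Nat.card H.edgeSet) :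
    Nonempty (H ≃g G) := by
  obtain ⟨f⟩ := h
  have hf : Function.Bijective f := f.injective.bijective_of_nat_card_le hV
  have hfE : Function.Surjective f.mapEdgeSet :=
    (f.mapEdgeSet.injective.bijective_of_nat_card_le hE).2
  refine ⟨⟨Equiv.ofBijective f hf, fun {a b} => ⟨fun hab => ?_, f.toHom.map_adj⟩⟩⟩
  obtain ⟨⟨e, he⟩, hfe⟩ := hfE ⟨s(f a, f b), hab⟩
  have hmap : Sym2.map f e = Sym2.map f s(a, b) := congrArg Subtype.val hfe
  rwa [Sym2.map.injective hf.1 hmap] at he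

end Containment

section CycleGraph

theorem val_sub_eq_val_sub_add_one {n : ℕ} {u v c : Fin n} (hv : v ≠ c) (huv : (v - u).val = 1) :
    (v - c).val = (u - c).val + 1 := by
  have hvu := Fin.intCast_val_sub_eq_sub_add_ite v u
  have hvc := Fin.intCast_val_sub_eq_sub_add_ite v c
  have huc := Fin.intCast_val_sub_eq_sub_add_ite u c
  simp only [Fin.le_def] at hvu hvc huc
  split_ifs at hvu hvc huc <;> omega

theorem colorable_two_of_hom_cycleGraph_of_not_surjective {V : Type*} {G : SimpleGraph V} {n : ℕ}
    (φ : G →g cycleGraph n) (hφ : ¬ Function.Surjective φ) : G.Colorable 2 := by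
  obtain ⟨c, hc⟩ : ∃ c, ∀ v, φ v ≠ c := by
    simpa only [Function.Surjective, not_forall, not_exists] using hφ
  -- Deleting `c` leaves a path, which is coloured by the parity of the distance from `c`.
  have hparity {u v : V} (huv : (φ v - φ u).val = 1) :
      ((φ u - c).val : ZMod 2) ≠ ((φ v - c).val : ZMod 2) := by
    rw [val_sub_eq_val_sub_add_one (hc v) huv]
    push_cast
    exact (add_ne_left.2 one_ne_zero).symm
  exact ⟨Coloring.mk (fun v => ((φ v - c).val : ZMod 2)) fun {u v} huv =>
    (cycleGraph_adj'.1 (φ.map_adj huv)).elim (fun h => (hparity h).symm) hparity⟩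

theorem le_of_odd_of_hom_cycleGraph {m n : ℕ} (hm : Odd m) (hm2 : 2 ≤ m)
    (φ : cycleGraph m →g cycleGraph n) : n ≤ m := by
  by_contra! hmn
  have hφ : ¬ Function.Surjective φ := fun h =>
    hmn.not_ge (by simpa using Fintype.card_le_of_surjective φ h)
  have hcol := (colorable_two_of_hom_cycleGraph_of_not_surjective φ hφ).chromaticNumber_le
  rw [chromaticNumber_cycleGraph_of_odd m hm2 hm] at hcol
  norm_num at hcol

end CycleGraph

section Degree

variable {V : Type*} [Fintype V] (G : SimpleGraph V)

theorem ncard_neighborSet_eq_degree [DecidableRel G.Adj] (v : V) :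
    (G.neighborSet v).ncard = G.degree v := by
  rw [← Nat.card_coe_set_eq, Nat.card_eq_fintype_card, card_neighborSet_eq_degree]

theorem sum_ncard_neighborSet :
    ∑ v, (G.neighborSet v).ncard = 2 * Nat.card G.edgeSet := by
  classical
  simp only [ncard_neighborSet_eq_degree, sum_degrees_eq_twice_card_edges,
    Nat.card_eq_fintype_card, edgeFinset_card]

theorem card_edgeSet_cycleGraph (n : ℕ) : Nat.card (cycleGraph (n + 3)).edgeSet = n + 3 := by
  have hsum := (cycleGraph (n + 3)).sum_degrees_eq_twice_card_edges
  simp only [cycleGraph_degree_three_le, Finset.sum_const, Finset.card_univ, Fintype.card_fin,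
    smul_eq_mul] at hsum
  rw [Nat.card_eq_fintype_card, ← edgeFinset_card]
  omega

theorem ncard_neighborSet_cycleGraph {n : ℕ} (v : Fin (n + 3)) :
    ((cycleGraph (n + 3)).neighborSet v).ncard = 2 := by
  rw [ncard_neighborSet_eq_degree, cycleGraph_degree_three_le]

end Degree

section Profile

variable {V W : Type*} [Fintype V] [Fintype W] {G : SimpleGraph V} {H : SimpleGraph W}
  {m L h t m' L' h' t' : ℕ}

open Classical in
/-- `G` has `m` edges, maximum degree `h`, minimum degree at least `t`, and is homomorphically
equivalent to the cycle of length `L`; for odd `L` the last condition implies that `G` has odd girth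
`L`. -/
structure HasProfile (m L h t : ℕ) (G : SimpleGraph V) : Prop where
  card_edgeSet : Nat.card G.edgeSet = m
  nonempty_hom_cycleGraph : Nonempty (G →g cycleGraph L)
  nonempty_cycleGraph_hom : Nonempty (cycleGraph L →g G)
  maxDegree_eq : G.maxDegree = h
  le_minDegree : t ≤ G.minDegree

open Classical in
theorem HasProfile.of_iso (hG : HasProfile m L h t G) (e : G ≃g H) : HasProfile m L h t H where
  card_edgeSet := (Nat.card_congr e.mapEdgeSet).symm.trans hG.card_edgeSet
  nonempty_hom_cycleGraph := hG.nonempty_hom_cycleGraph.map fun φ => φ.comp e.symm.toHom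
  nonempty_cycleGraph_hom := hG.nonempty_cycleGraph_hom.map fun φ => e.toHom.comp φ
  maxDegree_eq := e.maxDegree_eq.symm.trans hG.maxDegree_eq
  le_minDegree := hG.le_minDegree.trans_eq e.minDegree_eq

theorem HasProfile.card_edgeSet_le_of_isContained (hG : HasProfile m L h t G)
    (hH : HasProfile m' L' h' t' H) (hHG : H ⊑ G) : m' ≤ m :=
  hG.card_edgeSet ▸ hH.card_edgeSet ▸ _root_.card_edgeSet_le_of_isContained hHG

open Classical in
theorem HasProfile.maxDegree_le_of_isContained (hG : HasProfile m L h t G)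
    (hH : HasProfile m' L' h' t' H) (hHG : H ⊑ G) : h' ≤ h :=
  hG.maxDegree_eq ▸ hH.maxDegree_eq ▸ hHG.maxDegree_mono

theorem HasProfile.oddGirth_le_of_isContained (hG : HasProfile m L h t G)
    (hH : HasProfile m' L' h' t' H) (hL' : Odd L') (hL'2 : 2 ≤ L') (hHG : H ⊑ G) : L ≤ L' := by
  obtain ⟨φ⟩ := hG.nonempty_hom_cycleGraph
  obtain ⟨ψ⟩ := hH.nonempty_cycleGraph_hom
  obtain ⟨f⟩ := hHG
  exact le_of_odd_of_hom_cycleGraph hL' hL'2 ((φ.comp f.toHom).comp ψ)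

theorem HasProfile.le_card_neighborSet (hG : HasProfile m L h t G) (v : V) :
    t ≤ Nat.card (G.neighborSet v) := by
  classical
  rw [Nat.card_coe_set_eq, ncard_neighborSet_eq_degree]
  convert hG.le_minDegree.trans (G.minDegree_le_degree v)

open Classical in
theorem HasProfile.of_forall_ncard_neighborSet [Nonempty V] (hm : Nat.card G.edgeSet = m)
    (hGL : Nonempty (G →g cycleGraph L)) (hLG : Nonempty (cycleGraph L →g G))
    (hle : ∀ v, (G.neighborSet v).ncard ∈ Set.Icc t h)
    (hmax : ∃ v, (G.neighborSet v).ncard = h) : HasProfile m L h t G := by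
  simp only [ncard_neighborSet_eq_degree] at hle hmax
  obtain ⟨v, hv⟩ := hmax
  exact ⟨hm, hGL, hLG,
    le_antisymm (G.maxDegree_le_of_forall_degree_le h fun v => (hle v).2)
      (hv ▸ G.degree_le_maxDegree v),
    G.le_minDegree_of_forall_le_degree t fun v => (hle v).1⟩

end Profile

section Blowup

variable {V ι : Type*}

/-- The blow-up of `G` in which every vertex is replaced by an independent set indexed by `ι`. -/
def blowup (G : SimpleGraph V) (ι : Type*) : SimpleGraph (V × ι) :=
  G.comap Prod.fst

theorem ncard_neighborSet_blowup (G : SimpleGraph V) (v : V × ι) :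
    ((blowup G ι).neighborSet v).ncard = (G.neighborSet v.1).ncard * Nat.card ι := by
  have hprod : (blowup G ι).neighborSet v = G.neighborSet v.1 ×ˢ Set.univ := by
    ext w
    simp [blowup]
  rw [hprod, Set.ncard_prod, Set.ncard_univ]

theorem card_edgeSet_blowup [Finite V] [Finite ι] (G : SimpleGraph V) :
    Nat.card (blowup G ι).edgeSet = Nat.card G.edgeSet * Nat.card ι ^ 2 := by
  have := Fintype.ofFinite V
  have := Fintype.ofFinite ι
  have hsum := sum_ncard_neighborSet (blowup G ι)
  simp only [ncard_neighborSet_blowup, Fintype.sum_prod_type, Finset.sum_const, ← Finset.sum_mul,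
    sum_ncard_neighborSet G, Finset.card_univ, smul_eq_mul, ← Nat.card_eq_fintype_card,
    ← Finset.mul_sum] at hsum
  linarith

end Blowup

section Bipartite

variable {α β : Type*}

/-- The bipartite graph with parts `α` and `β` whose edges are the pairs in the relation `r`. -/
def bipartiteGraph (r : α → β → Prop) : SimpleGraph (α ⊕ β) where
  Adj
    | .inl a, .inr b => r a b
    | .inr b, .inl a => r a b
    | _, _ => False
  symm := ⟨by rintro (a | b) (a' | b') <;> exact id⟩
  loopless := ⟨by rintro (a | b) <;> exact id⟩

theorem ncard_neighborSet_bipartiteGraph_inl (r : α → β → Prop) (a : α) :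
    ((bipartiteGraph r).neighborSet (.inl a)).ncard = {b | r a b}.ncard := by
  have himage : (bipartiteGraph r).neighborSet (.inl a) = Sum.inr '' {b | r a b} := by
    ext (a' | b) <;> simp [bipartiteGraph]
  rw [himage, Set.ncard_image_of_injective _ Sum.inr_injective]

theorem ncard_neighborSet_bipartiteGraph_inr (r : α → β → Prop) (b : β) :
    ((bipartiteGraph r).neighborSet (.inr b)).ncard = {a | r a b}.ncard := by
  have himage : (bipartiteGraph r).neighborSet (.inr b) = Sum.inl '' {a | r a b} := by
    ext (a | b') <;> simp [bipartiteGraph]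
  rw [himage, Set.ncard_image_of_injective _ Sum.inl_injective]

theorem bipartiteGraph_injective :
    Function.Injective (bipartiteGraph : (α → β → Prop) → SimpleGraph (α ⊕ β)) := fun r r' h => by
  ext a b
  exact iff_of_eq (congrArg (fun G : SimpleGraph (α ⊕ β) => G.Adj (.inl a) (.inr b)) h)

theorem nonempty_bipartiteGraph_hom (r : α → β → Prop) {V : Type*} {G : SimpleGraph V} {u v : V}
    (huv : G.Adj u v) : Nonempty (bipartiteGraph r →g G) := by
  refine ⟨⟨Sum.elim (fun _ => u) fun _ => v, ?_⟩⟩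
  rintro (a | b) (a' | b') hab
  exacts [hab.elim, huv, huv.symm, hab.elim]

theorem card_edgeSet_bipartiteGraph [Fintype α] [Finite β] (r : α → β → Prop) :
    Nat.card (bipartiteGraph r).edgeSet = ∑ a, {b | r a b}.ncard := by
  have hedge : (bipartiteGraph r).edgeSet =
      (fun p : α × β => s(Sum.inl p.1, Sum.inr p.2)) '' {p | r p.1 p.2} := by
    ext e
    induction e with | h u v => ?_
    rcases u with a | b <;> rcases v with a' | b' <;> simp [bipartiteGraph]
  have hinj : Function.Injective (fun p : α × β => s((Sum.inl p.1 : α ⊕ β), Sum.inr p.2)) := by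
    rintro ⟨a, b⟩ ⟨a', b'⟩ h
    simpa using h
  rw [Nat.card_coe_set_eq, hedge, Set.ncard_image_of_injective _ hinj, ← Nat.card_coe_set_eq]
  exact (Nat.card_congr (Equiv.subtypeProdEquivSigmaSubtype r)).trans Nat.card_sigma

end Bipartite

section Family

variable {γ β : Type*} [Fintype γ]

theorem exists_finset_family_between {A B : γ → Finset β} {M : ℕ} (hAB : ∀ c, A c ⊆ B c)
    (hA : ∑ c, (A c).card ≤ M) (hB : M ≤ ∑ c, (B c).card) :
    ∃ D : γ → Finset β, (∀ c, A c ⊆ D c ∧ D c ⊆ B c) ∧ ∑ c, (D c).card = M := by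
  classical
  rw [← Finset.card_sigma] at hA hB
  obtain ⟨S, hAS, hSB, hS⟩ := Finset.exists_subsuperset_card_eq
    (Finset.sigma_mono subset_rfl hAB) hA hB
  let D (c : γ) : Finset β := {b ∈ B c | ⟨c, b⟩ ∈ S}
  have hD : Finset.univ.sigma D = S := by
    ext ⟨c, b⟩
    have hcb : ⟨c, b⟩ ∈ S → b ∈ B c := fun h => (Finset.mem_sigma.1 (hSB h)).2
    simpa [D] using hcb
  refine ⟨D, fun c => ⟨fun b hb => ?_, Finset.filter_subset _ _⟩, ?_⟩
  · exact Finset.mem_filter.2 ⟨hAB c hb, hAS (Finset.mem_sigma.2 ⟨Finset.mem_univ c, hb⟩)⟩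
  · rw [← Finset.card_sigma, hD, hS]

theorem exists_finset_family_card_mem_Icc [Fintype β] {t h M : ℕ} (c₀ : γ) (hth : t ≤ h)
    (hh : h ≤ Fintype.card β) (hlow : Fintype.card γ * t + h ≤ M) (hhigh : M ≤ Fintype.card γ * h) :
    ∃ D : γ → Finset β,
      (∀ c, (D c).card ∈ Set.Icc t h) ∧ (D c₀).card = h ∧ ∑ c, (D c).card = M := by
  classical
  obtain ⟨Q, -, hQ⟩ := Finset.exists_subset_card_eq (Finset.card_univ (α := β) ▸ hh)
  obtain ⟨T, hTQ, hT⟩ := Finset.exists_subset_card_eq (hQ ▸ hth)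
  have hA : ∑ c, (if c = c₀ then Q else T).card ≤ M := by
    calc ∑ c, (if c = c₀ then Q else T).card ≤ ∑ c, (t + if c = c₀ then h else 0) :=
          Finset.sum_le_sum fun c _ => by split_ifs <;> omega
      _ ≤ M := by simpa [Finset.sum_add_distrib] using hlow
  obtain ⟨D, hD, hDM⟩ := exists_finset_family_between (B := fun _ => Q)
    (fun c => by split_ifs; exacts [subset_rfl, hTQ]) hA (by simpa [hQ] using hhigh)
  have hDh (c : γ) : (D c).card ≤ h := hQ ▸ Finset.card_le_card (hD c).2
  have hTD (c : γ) : T ⊆ D c := by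
    refine subset_trans ?_ (hD c).1
    split_ifs
    exacts [hTQ, subset_rfl]
  refine ⟨D, fun c => ⟨hT ▸ Finset.card_le_card (hTD c), hDh c⟩, (hDh c₀).antisymm ?_, hDM⟩
  exact hQ ▸ Finset.card_le_card (by simpa using (hD c₀).1)

end Family

section PermRel

variable {ι σ : Type*}

/-- The union of the graphs of the bijections `π i j` from the `i`-th row of `ι × σ` to the `j`-th
one. -/
def permRel (π : ι → ι → Equiv.Perm σ) (a b : ι × σ) : Prop :=
  π a.1 b.1 a.2 = b.2

theorem permRel_injective :
    Function.Injective (permRel : (ι → ι → Equiv.Perm σ) → ι × σ → ι × σ → Prop) := by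
  intro π π' h
  ext i j x
  have hij : permRel π' (i, x) (j, π i j x) := h ▸ rfl
  exact hij.symm

theorem ncard_setOf_permRel_left (π : ι → ι → Equiv.Perm σ) (a : ι × σ) :
    {b | permRel π a b}.ncard = Nat.card ι := by
  have hrange : {b | permRel π a b} = Set.range fun j => (j, π a.1 j a.2) := by
    ext ⟨j, y⟩
    simp [permRel]
  rw [hrange, ← Set.image_univ, Set.ncard_image_of_injective _ fun _ _ h => congrArg Prod.fst h,
    Set.ncard_univ]

theorem ncard_setOf_permRel_right (π : ι → ι → Equiv.Perm σ) (b : ι × σ) :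
    {a | permRel π a b}.ncard = Nat.card ι := by
  have hrange : {a | permRel π a b} = Set.range fun i => (i, (π i b.1).symm b.2) := by
    ext ⟨i, x⟩
    simpa [permRel] using (π i b.1).eq_symm_apply.symm.trans eq_comm
  rw [hrange, ← Set.image_univ, Set.ncard_image_of_injective _ fun _ _ h => congrArg Prod.fst h,
    Set.ncard_univ]

end PermRel

section ProfileGraph

variable {ι σ γ : Type*} {L t h : ℕ} {π : ι → ι → Equiv.Perm σ} {D : γ → Finset (ι × σ)}

/-- The bipartite relation of `profileGraph`: the permutations carry the entropy, and the
neighbourhoods `D c` of the additional vertices `c` adjust the number of edges and the maximum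
degree. -/
def profileRel (π : ι → ι → Equiv.Perm σ) (D : γ → Finset (ι × σ)) :
    (ι × σ) ⊕ γ → ι × σ → Prop :=
  Sum.elim (permRel π) fun c b => b ∈ D c

/-- The disjoint union of a blow-up of a cycle of length `L`, which determines the odd girth, and
of the bipartite graph of `profileRel π D`. -/
def profileGraph (L t : ℕ) (π : ι → ι → Equiv.Perm σ) (D : γ → Finset (ι × σ)) :
    SimpleGraph ((Fin L × Fin t) ⊕ (((ι × σ) ⊕ γ) ⊕ (ι × σ))) :=
  blowup (cycleGraph L) (Fin t) ⊕g bipartiteGraph (profileRel π D)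

theorem profileGraph_injective (L t : ℕ) (D : γ → Finset (ι × σ)) :
    Function.Injective fun π => profileGraph L t π D := by
  intro π π' hππ'
  have hrel : profileRel π D = profileRel π' D := by
    refine bipartiteGraph_injective ?_
    ext u v
    have huv := congrArg (fun G => G.Adj (.inr u) (.inr v)) hππ'
    exact iff_of_eq (by simpa only [profileGraph, sum_adj_inr] using huv)
  exact permRel_injective (funext fun a => congrFun hrel (.inl a))

theorem card_edgeSet_profileGraph [Fintype ι] [Fintype σ] [Fintype γ] :
    Nat.card (profileGraph (L + 3) t π D).edgeSet =
      (L + 3) * t ^ 2 + (Fintype.card ι ^ 2 * Fintype.card σ + ∑ c, (D c).card) := by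
  have hD (c : γ) : {b | b ∈ D c}.ncard = (D c).card := Set.ncard_coe_finset (D c)
  rw [profileGraph, Nat.card_congr edgeSetSumEquiv, Nat.card_sum, card_edgeSet_blowup,
    card_edgeSet_cycleGraph, card_edgeSet_bipartiteGraph, Fintype.sum_sum_type]
  simp only [profileRel, Sum.elim_inl, Sum.elim_inr, ncard_setOf_permRel_left, hD,
    Finset.sum_const, Finset.card_univ, Fintype.card_prod, Nat.card_eq_fintype_card,
    Fintype.card_fin, smul_eq_mul]
  ring

theorem ncard_setOf_profileRel_right_mem_Icc [Fintype ι] [Finite σ] [Fintype γ] (b : ι × σ) :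
    {a | profileRel π D a b}.ncard ∈
      Set.Icc (Fintype.card ι) (Fintype.card ι + Fintype.card γ) := by
  have hunion : {a | profileRel π D a b} =
      Sum.inl '' {a | permRel π a b} ∪ Sum.inr '' {c | b ∈ D c} := by
    ext (a | c) <;> simp [profileRel]
  have hleft : (Sum.inl '' {a | permRel π a b} : Set ((ι × σ) ⊕ γ)).ncard = Fintype.card ι := by
    rw [Set.ncard_image_of_injective _ Sum.inl_injective, ncard_setOf_permRel_right,
      Nat.card_eq_fintype_card]
  have hright : (Sum.inr '' {c | b ∈ D c} : Set ((ι × σ) ⊕ γ)).ncard ≤ Fintype.card γ := by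
    rw [Set.ncard_image_of_injective _ Sum.inr_injective, ← Nat.card_eq_fintype_card]
    exact Set.ncard_le_card _
  rw [hunion]
  exact ⟨hleft.symm.le.trans (Set.ncard_le_ncard Set.subset_union_left),
    (Set.ncard_union_le _ _).trans (by omega)⟩

theorem ncard_neighborSet_profileGraph_inl (v : Fin (L + 3) × Fin t) :
    ((profileGraph (L + 3) t π D).neighborSet (.inl v)).ncard = 2 * t := by
  rw [profileGraph, neighborSet_sum_inl, Set.ncard_image_of_injective _ Sum.inl_injective,
    ncard_neighborSet_blowup, ncard_neighborSet_cycleGraph, Nat.card_fin]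

theorem ncard_neighborSet_profileGraph_inr (v : ((ι × σ) ⊕ γ) ⊕ (ι × σ)) :
    ((profileGraph L t π D).neighborSet (.inr v)).ncard =
      ((bipartiteGraph (profileRel π D)).neighborSet v).ncard := by
  rw [profileGraph, neighborSet_sum_inr, Set.ncard_image_of_injective _ Sum.inr_injective]

theorem ncard_neighborSet_profileGraph_extra (c : γ) :
    ((profileGraph L t π D).neighborSet (.inr (.inl (.inr c)))).ncard = (D c).card := by
  rw [ncard_neighborSet_profileGraph_inr, ncard_neighborSet_bipartiteGraph_inl]
  exact Set.ncard_coe_finset (D c)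

theorem ncard_neighborSet_profileGraph_mem_Icc [Fintype ι] [Finite σ] [Fintype γ]
    (ht : t ≤ Fintype.card ι) (hth : 2 * t ≤ h) (hh : Fintype.card ι + Fintype.card γ ≤ h)
    (hD : ∀ c, (D c).card ∈ Set.Icc t h) (v) :
    ((profileGraph (L + 3) t π D).neighborSet v).ncard ∈ Set.Icc t h := by
  rcases v with v | (a | c) | b
  · rw [ncard_neighborSet_profileGraph_inl, Set.mem_Icc]
    omega
  · have ha : {b | profileRel π D (.inl a) b}.ncard = Fintype.card ι :=
      (ncard_setOf_permRel_left π a).trans Nat.card_eq_fintype_card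
    rw [ncard_neighborSet_profileGraph_inr, ncard_neighborSet_bipartiteGraph_inl, ha, Set.mem_Icc]
    omega
  · exact ncard_neighborSet_profileGraph_extra (L := L + 3) c ▸ hD c
  · rw [ncard_neighborSet_profileGraph_inr, ncard_neighborSet_bipartiteGraph_inr]
    exact Set.Icc_subset_Icc ht hh (ncard_setOf_profileRel_right_mem_Icc b)

theorem nonempty_profileGraph_hom_cycleGraph (L t : ℕ) (π : ι → ι → Equiv.Perm σ)
    (D : γ → Finset (ι × σ)) : Nonempty (profileGraph (L + 3) t π D →g cycleGraph (L + 3)) := by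
  obtain ⟨φ⟩ := nonempty_bipartiteGraph_hom (profileRel π D)
    (cycleGraph_adj'.2 (.inr (by simp)) : (cycleGraph (L + 3)).Adj 0 1)
  refine ⟨⟨Sum.elim Prod.fst φ, ?_⟩⟩
  rintro (u | u) (v | v) huv
  · exact huv
  · exact absurd huv (not_adj_sum_inl_inr u v)
  · exact absurd huv.symm (not_adj_sum_inl_inr v u)
  · exact φ.map_adj huv

theorem hasProfile_profileGraph [Fintype ι] [Fintype σ] [Fintype γ] (ht0 : 0 < t)
    (ht : t ≤ Fintype.card ι) (hth : 2 * t ≤ h) (hh : Fintype.card ι + Fintype.card γ ≤ h)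
    (hD : ∀ c, (D c).card ∈ Set.Icc t h) {c₀ : γ} (hc₀ : (D c₀).card = h) :
    HasProfile ((L + 3) * t ^ 2 + (Fintype.card ι ^ 2 * Fintype.card σ + ∑ c, (D c).card))
      (L + 3) h t (profileGraph (L + 3) t π D) := by
  have : Nonempty ((Fin (L + 3) × Fin t) ⊕ (((ι × σ) ⊕ γ) ⊕ (ι × σ))) := ⟨.inr (.inl (.inr c₀))⟩
  exact .of_forall_ncard_neighborSet card_edgeSet_profileGraph
    (nonempty_profileGraph_hom_cycleGraph L t π D) ⟨⟨fun i => .inl (i, ⟨0, ht0⟩), id⟩⟩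
    (ncard_neighborSet_profileGraph_mem_Icc ht hth hh hD)
    ⟨_, (ncard_neighborSet_profileGraph_extra c₀).trans hc₀⟩

theorem factorial_pow_le_ncard_hasProfile {m L t d s g h n : ℕ} (ht0 : 0 < t) (htd : t ≤ d)
    (hth : 2 * t ≤ h) (hdg : d + g ≤ h) (hds : h ≤ d * s)
    (hlow : (L + 3) * t ^ 2 + (d ^ 2 * s + (g * t + h)) ≤ m)
    (hhigh : m ≤ (L + 3) * t ^ 2 + (d ^ 2 * s + g * h))
    (hn : (L + 3) * t + 2 * (d * s) + g = n) :
    s.factorial ^ d ^ 2 ≤ {G : SimpleGraph (Fin n) | HasProfile m (L + 3) h t G}.ncard := by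
  have hg : 0 < g := Nat.pos_of_ne_zero (by rintro rfl; omega)
  obtain ⟨D, hD, hDh, hDsum⟩ := exists_finset_family_card_mem_Icc (γ := Fin g)
    (β := Fin d × Fin s) (M := m - (L + 3) * t ^ 2 - d ^ 2 * s) ⟨0, hg⟩ (by omega : t ≤ h)
    (by simpa using hds) (by rw [Fintype.card_fin]; omega) (by rw [Fintype.card_fin]; omega)
  let e : (Fin (L + 3) × Fin t) ⊕ (((Fin d × Fin s) ⊕ Fin g) ⊕ (Fin d × Fin s)) ≃ Fin n :=
    Fintype.equivFinOfCardEq (by simp [← hn]; ring)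
  have hinj : Function.Injective fun π => (profileGraph (L + 3) t π D).map e :=
    (map_injective e.toEmbedding).comp (profileGraph_injective (L + 3) t D)
  have hprofile (π : Fin d → Fin d → Equiv.Perm (Fin s)) :
      HasProfile m (L + 3) h t ((profileGraph (L + 3) t π D).map e) := by
    have hm : (L + 3) * t ^ 2 + (d ^ 2 * s + ∑ c, (D c).card) = m := by omega
    have := hasProfile_profileGraph (L := L) (π := π) ht0 (by simpa using htd) hth
      (by simpa using hdg) hD hDh
    simp only [Fintype.card_fin, hm] at this
    exact this.of_iso (Iso.map e _)
  calc s.factorial ^ d ^ 2 = Nat.card (Fin d → Fin d → Equiv.Perm (Fin s)) := by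
        simp [Fintype.card_perm, sq, pow_mul]
    _ = (Set.range fun π => (profileGraph (L + 3) t π D).map e).ncard := by
        rw [← Set.image_univ, Set.ncard_image_of_injective _ hinj, Set.ncard_univ]
    _ ≤ _ := Set.ncard_le_ncard (Set.range_subset_iff.2 hprofile)

end ProfileGraph

section IsoReps

variable {V : Type*}

/-- The isomorphism relation on the graphs with vertex set `V`. -/
def isoSetoid (V : Type*) : Setoid (SimpleGraph V) where
  r G H := Nonempty (G ≃g H)
  iseqv := ⟨fun _ => ⟨.refl⟩, fun ⟨e⟩ => ⟨e.symm⟩, fun ⟨e⟩ ⟨e'⟩ => ⟨e.trans e'⟩⟩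

/-- A set of representatives of the isomorphism classes of graphs with vertex set `V`. -/
def isoReps (V : Type*) : Set (SimpleGraph V) :=
  Set.range (Quotient.out (s := isoSetoid V))

theorem exists_mem_isoReps_nonempty_iso (G : SimpleGraph V) :
    ∃ H ∈ isoReps V, Nonempty (H ≃g G) :=
  ⟨_, ⟨_, rfl⟩, Quotient.exact (Quotient.out_eq (Quotient.mk (isoSetoid V) G))⟩

theorem eq_of_mem_isoReps_of_nonempty_iso {G H : SimpleGraph V} (hG : G ∈ isoReps V)
    (hH : H ∈ isoReps V) (h : Nonempty (G ≃g H)) : G = H := by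
  obtain ⟨q, rfl⟩ := hG
  obtain ⟨q', rfl⟩ := hH
  have hqq' : Quotient.mk (isoSetoid V) q.out = Quotient.mk (isoSetoid V) q'.out := Quotient.sound h
  rw [Quotient.out_eq, Quotient.out_eq] at hqq'
  rw [hqq']

theorem ncard_le_ncard_isoReps_mul_factorial [Fintype V] {p : SimpleGraph V → Prop}
    (hp : ∀ G H, Nonempty (G ≃g H) → p G → p H) :
    {G | p G}.ncard ≤ {G ∈ isoReps V | p G}.ncard * (Fintype.card V).factorial := by
  classical
  have hcover : {G | p G} ⊆ (fun x : SimpleGraph V × Equiv.Perm V => x.1.comap x.2) ''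
      ({G ∈ isoReps V | p G} ×ˢ Set.univ) := by
    intro G hG
    obtain ⟨H, hH, ⟨e⟩⟩ := exists_mem_isoReps_nonempty_iso G
    refine ⟨(H, e.symm.toEquiv), ⟨⟨hH, hp G H ⟨e.symm⟩ hG⟩, trivial⟩, ?_⟩
    ext v w
    exact e.symm.map_adj_iff
  calc {G | p G}.ncard ≤ ({G ∈ isoReps V | p G} ×ˢ (Set.univ : Set (Equiv.Perm V))).ncard :=
        (Set.ncard_le_ncard hcover).trans (Set.ncard_image_le (Set.toFinite _))
    _ = {G ∈ isoReps V | p G}.ncard * (Fintype.card V).factorial := by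
        rw [Set.ncard_prod, Set.ncard_univ, Nat.card_perm, Nat.card_eq_fintype_card]

end IsoReps

section Factorial

theorem mul_log_sub_one_le_log_factorial (n : ℕ) :
    n * (Real.log n - 1) ≤ Real.log n.factorial := by
  have hexp := Real.pow_div_factorial_le_exp (n : ℝ) n.cast_nonneg n
  rcases n.eq_zero_or_pos with rfl | hn
  · simp
  · rw [← Real.log_le_iff_le_exp (by positivity), Real.log_div (by positivity) (by positivity),
      Real.log_pow] at hexp
    linarith

theorem choose_le_exp_one_mul_div_pow (n k : ℕ) :
    (n.choose k : ℝ) ≤ (Real.exp 1 * n / k) ^ k := by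
  rcases k.eq_zero_or_pos with rfl | hk
  · simp
  have hexp := Real.pow_div_factorial_le_exp (k : ℝ) k.cast_nonneg k
  rw [div_le_iff₀ (by positivity)] at hexp
  calc (n.choose k : ℝ) ≤ (n : ℝ) ^ k / k.factorial := Nat.choose_le_pow_div k n
    _ ≤ (n : ℝ) ^ k * (Real.exp k / (k : ℝ) ^ k) := by
        rw [div_eq_mul_inv]
        gcongr
        rwa [inv_le_iff_one_le_mul₀ (by positivity), div_mul_eq_mul_div, one_le_div (by positivity)]
    _ = (Real.exp 1 * n / k) ^ k := by
        rw [div_pow, mul_pow, ← Real.exp_nat_mul, mul_one]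
        ring

end Factorial

section EdgeCount

theorem ncard_setOf_card_edgeSet_eq_le (V : Type*) [Fintype V] (m : ℕ) :
    {G : SimpleGraph V | Nat.card G.edgeSet = m}.ncard ≤ (Fintype.card (Sym2 V)).choose m := by
  classical
  rw [← Finset.card_univ, ← Finset.card_powersetCard, ← Set.ncard_coe_finset]
  refine Set.ncard_le_ncard_of_injOn (fun G => G.edgeFinset) (fun G hG => ?_)
    fun G _ H _ h => edgeFinset_inj.1 h
  rw [Set.mem_ofPred_eq, Nat.card_eq_fintype_card, ← edgeFinset_card] at hG
  exact Finset.mem_coe.2 (Finset.mem_powersetCard.2 ⟨Finset.subset_univ _, hG⟩)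

end EdgeCount

section Parameters

variable {m : ℕ}

/-- The length of the cycle to which the members with `m` edges are homomorphically equivalent. It
determines `m.sqrt`. -/
def cycleLengthParam (m : ℕ) : ℕ := 2 * m.sqrt + 3

/-- The maximum degree of the members with `m` edges. It determines `m` once `m.sqrt` is known; the
subtraction does not truncate. -/
def maxDegreeParam (m : ℕ) : ℕ := (m.sqrt + 2) ^ 2 - m

/-- The lower bound imposed on the minimum degree of the members with `m` edges. -/
noncomputable def minDegreeParam (m : ℕ) : ℕ := ⌊Real.log m⌋₊

/-- The number of vertices of the members with `m` edges. -/
noncomputable def orderParam (m : ℕ) : ℕ := ⌊m / Real.log m⌋₊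

/-- The number of blocks on each side of the bipartite part. It is also the degree of the vertices
in the blocks, so it has to be about the average degree `2 * log m` of the whole graph. -/
noncomputable def blockCount (m : ℕ) : ℕ := 2 * minDegreeParam m - 1

/-- The common size of the blocks permuted in the construction of the members with `m` edges. -/
noncomputable def blockSize (m : ℕ) : ℕ :=
  (orderParam m - cycleLengthParam m * minDegreeParam m - (m.sqrt + 1)) / (2 * blockCount m)

/-- The number of vertices with a freely adjustable neighbourhood. -/
noncomputable def padding (m : ℕ) : ℕ :=
  orderParam m - cycleLengthParam m * minDegreeParam m - 2 * (blockCount m * blockSize m)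

/-- The growth conditions under which the construction works. -/
structure IsLarge (m : ℕ) : Prop where
  ten_le_log_log : 10 ≤ Real.log (Real.log m)
  log_pow_four_le_sqrt : 1000 * Real.log m ^ 4 ≤ √m

theorem eventually_isLarge : ∀ᶠ m : ℕ in atTop, IsLarge m := by
  have hlog : Tendsto (fun m : ℕ => Real.log m) atTop atTop :=
    Real.tendsto_log_atTop.comp tendsto_natCast_atTop_atTop
  have hloglog := (Real.tendsto_log_atTop.comp hlog).eventually_ge_atTop 10
  have hlittleO : (fun x : ℝ => Real.log x ^ 4) =o[atTop] fun x : ℝ => x ^ (1 / 2 : ℝ) := by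
    simpa using isLittleO_log_rpow_rpow_atTop (4 : ℝ) (show (0 : ℝ) < 1 / 2 by norm_num)
  have hpow := tendsto_natCast_atTop_atTop.eventually
    (hlittleO.bound (show (0 : ℝ) < 1 / 1000 by norm_num))
  filter_upwards [hloglog, hpow] with m hm hm'
  rw [Real.norm_of_nonneg (by positivity), Real.norm_of_nonneg (by positivity),
    ← Real.sqrt_eq_rpow] at hm'
  exact ⟨hm, by linarith⟩

theorem maxDegreeParam_add (m : ℕ) : maxDegreeParam m + m = (m.sqrt + 2) ^ 2 := by
  refine Nat.sub_add_cancel ((Nat.lt_succ_sqrt' m).le.trans ?_)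
  exact Nat.pow_le_pow_left (Nat.le_succ _) 2

theorem maxDegreeParam_mem_Icc (m : ℕ) :
    maxDegreeParam m ∈ Set.Icc (2 * m.sqrt + 4) (4 * m.sqrt + 4) := by
  have hadd := maxDegreeParam_add m
  have hle := Nat.sqrt_le' m
  have hlt := Nat.lt_succ_sqrt' m
  rw [Nat.succ_eq_add_one] at hlt
  constructor <;> linarith

theorem eq_of_cycleLengthParam_le_of_maxDegreeParam_le {m' : ℕ} (hm : m' ≤ m)
    (hL : cycleLengthParam m ≤ cycleLengthParam m') (hh : maxDegreeParam m' ≤ maxDegreeParam m) :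
    m = m' := by
  have hsqrt : m.sqrt = m'.sqrt := by
    have := Nat.sqrt_le_sqrt hm
    unfold cycleLengthParam at hL
    omega
  have hadd := maxDegreeParam_add m
  have hadd' := maxDegreeParam_add m'
  rw [hsqrt] at hadd
  omega

namespace IsLarge

variable (hm : IsLarge m)
include hm

theorem log_pos : 0 < Real.log m := by
  refine (Real.log_natCast_nonneg m).lt_of_ne fun h => ?_
  have := hm.ten_le_log_log
  rw [← h, Real.log_zero] at this
  linarith

theorem three_mul_log_log_le_log : 3 * Real.log (Real.log m) ≤ Real.log m := by
  have hnonneg : 0 ≤ Real.log (Real.log m) := by linarith [hm.ten_le_log_log]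
  have hquad := Real.quadratic_le_exp_of_nonneg hnonneg
  rw [Real.exp_log hm.log_pos] at hquad
  nlinarith [hm.ten_le_log_log]

theorem ten_le_log : 10 ≤ Real.log m := by
  linarith [hm.three_mul_log_log_le_log, hm.ten_le_log_log]

theorem pos : 0 < m :=
  Nat.pos_of_ne_zero fun h => hm.log_pos.ne' (by simp [h])

theorem sqrt_mul_log_pow_le : 1000 * (√m * Real.log m ^ 4) ≤ m := by
  nlinarith [mul_le_mul_of_nonneg_left hm.log_pow_four_le_sqrt (Real.sqrt_nonneg m),
    Real.mul_self_sqrt (Nat.cast_nonneg (α := ℝ) m)]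

theorem minDegreeParam_le : (minDegreeParam m : ℝ) ≤ Real.log m :=
  Nat.floor_le hm.log_pos.le

theorem orderParam_mul_log_le : orderParam m * Real.log m ≤ m :=
  (le_div_iff₀ hm.log_pos).1 (Nat.floor_le (div_nonneg m.cast_nonneg hm.log_pos.le))

theorem minDegreeParam_pos : 0 < minDegreeParam m :=
  Nat.floor_pos.2 (by linarith [hm.ten_le_log])

theorem hundred_mul_minDegreeParam_le_sqrt : 100 * minDegreeParam m ≤ m.sqrt := by
  have hpow : Real.log m ≤ Real.log m ^ 4 :=
    le_self_pow₀ (by linarith [hm.ten_le_log]) (by norm_num)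
  have hsqrt : √(m : ℝ) ≤ m.sqrt + 1 := Real.real_sqrt_le_nat_sqrt_succ
  have : (100 : ℝ) * minDegreeParam m ≤ m.sqrt := by
    linarith [hm.minDegreeParam_le, hm.log_pow_four_le_sqrt, hm.ten_le_log]
  exact_mod_cast this

theorem hundred_mul_sqrt_mul_minDegreeParam_sq_le_orderParam :
    100 * (m.sqrt * minDegreeParam m ^ 2) ≤ orderParam m := by
  refine Nat.le_floor ((le_div_iff₀ hm.log_pos).2 ?_)
  have hlog := hm.log_pos
  have hsq : (minDegreeParam m : ℝ) ^ 2 ≤ Real.log m ^ 2 :=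
    pow_le_pow_left₀ (Nat.cast_nonneg _) hm.minDegreeParam_le 2
  have hpow : Real.log m ^ 3 ≤ Real.log m ^ 4 :=
    pow_le_pow_right₀ (by linarith [hm.ten_le_log]) (by norm_num)
  push_cast
  calc 100 * ((m.sqrt : ℝ) * minDegreeParam m ^ 2) * Real.log m
      ≤ 100 * (√m * Real.log m ^ 2) * Real.log m := by
        gcongr
        exact Real.nat_sqrt_le_real_sqrt
    _ = 100 * (√m * Real.log m ^ 3) := by ring
    _ ≤ 1000 * (√m * Real.log m ^ 4) := by gcongr; norm_num
    _ ≤ m := hm.sqrt_mul_log_pow_le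

theorem minDegreeParam_mul_orderParam_le : minDegreeParam m * orderParam m ≤ m := by
  have : (minDegreeParam m : ℝ) * orderParam m ≤ m :=
    (mul_le_mul_of_nonneg_right hm.minDegreeParam_le (Nat.cast_nonneg _)).trans
      ((mul_comm _ _).trans_le hm.orderParam_mul_log_le)
  exact_mod_cast this

theorem blockCount_add_one : blockCount m + 1 = 2 * minDegreeParam m := by
  have := hm.minDegreeParam_pos
  unfold blockCount
  omega

theorem cycleLengthParam_mul_add_le_orderParam :
    cycleLengthParam m * minDegreeParam m + (m.sqrt + 1) ≤ orderParam m := by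
  have hle := hm.hundred_mul_sqrt_mul_minDegreeParam_sq_le_orderParam
  have hl := hm.minDegreeParam_pos
  have hlk := hm.hundred_mul_minDegreeParam_le_sqrt
  unfold cycleLengthParam
  nlinarith

theorem orderParam_eq :
    cycleLengthParam m * minDegreeParam m + 2 * (blockCount m * blockSize m) + padding m =
      orderParam m := by
  have hle := hm.cycleLengthParam_mul_add_le_orderParam
  have hdiv := Nat.mul_div_le
    (orderParam m - cycleLengthParam m * minDegreeParam m - (m.sqrt + 1)) (2 * blockCount m)
  rw [mul_assoc] at hdiv
  unfold padding blockSize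
  omega

theorem padding_mem_Ioo :
    padding m ∈ Set.Ioo m.sqrt (m.sqrt + 1 + 2 * blockCount m) := by
  have hle := hm.cycleLengthParam_mul_add_le_orderParam
  have hpos := hm.blockCount_add_one
  have hlt := Nat.lt_div_mul_add (b := 2 * blockCount m)
    (a := orderParam m - cycleLengthParam m * minDegreeParam m - (m.sqrt + 1))
    (by have := hm.minDegreeParam_pos; omega)
  have hdiv := Nat.div_mul_le_self
    (orderParam m - cycleLengthParam m * minDegreeParam m - (m.sqrt + 1)) (2 * blockCount m)
  rw [← blockSize, mul_comm (blockSize m), mul_assoc] at hlt hdiv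
  unfold padding
  constructor <;> omega

theorem blockCount_add_padding_le_maxDegreeParam :
    blockCount m + padding m ≤ maxDegreeParam m := by
  have hd := hm.blockCount_add_one
  have hg := hm.padding_mem_Ioo.2
  have hh := (maxDegreeParam_mem_Icc m).1
  have hlk := hm.hundred_mul_minDegreeParam_le_sqrt
  omega

theorem maxDegreeParam_le_blockCount_mul_blockSize :
    maxDegreeParam m ≤ blockCount m * blockSize m := by
  have hn := hm.orderParam_eq
  have hg := hm.padding_mem_Ioo.2
  have hd := hm.blockCount_add_one
  have hh := (maxDegreeParam_mem_Icc m).2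
  have hkn := hm.hundred_mul_sqrt_mul_minDegreeParam_sq_le_orderParam
  have hlk := hm.hundred_mul_minDegreeParam_le_sqrt
  have hk : m.sqrt ≤ m.sqrt * minDegreeParam m := Nat.le_mul_of_pos_right _ hm.minDegreeParam_pos
  have hkl : m.sqrt * minDegreeParam m ≤ m.sqrt * minDegreeParam m ^ 2 :=
    Nat.mul_le_mul_left _ (Nat.le_self_pow two_ne_zero _)
  rw [cycleLengthParam, add_mul, mul_assoc] at hn
  omega

theorem le_edge_count :
    m ≤ cycleLengthParam m * minDegreeParam m ^ 2 +
      (blockCount m ^ 2 * blockSize m + padding m * maxDegreeParam m) := by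
  have hlt : m < (m.sqrt + 1) * (m.sqrt + 1) := Nat.lt_succ_sqrt m
  have hgh : (m.sqrt + 1) * (m.sqrt + 1) ≤ padding m * maxDegreeParam m :=
    Nat.mul_le_mul hm.padding_mem_Ioo.1 (by linarith [(maxDegreeParam_mem_Icc m).1])
  omega

theorem edge_count_le :
    cycleLengthParam m * minDegreeParam m ^ 2 + (blockCount m ^ 2 * blockSize m +
      (padding m * minDegreeParam m + maxDegreeParam m)) ≤ m := by
  have hd := hm.blockCount_add_one
  have hl := hm.minDegreeParam_pos
  have hlk := hm.hundred_mul_minDegreeParam_le_sqrt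
  have hkn := hm.hundred_mul_sqrt_mul_minDegreeParam_sq_le_orderParam
  have hh := (maxDegreeParam_mem_Icc m).2
  -- The blocks leave room for `n / 2` of the `m` edges, which exceeds the remaining terms.
  have hblock : 2 * (blockCount m ^ 2 * blockSize m) + orderParam m ≤ 2 * m := by
    have hds : 2 * (blockCount m * blockSize m) ≤ orderParam m := by
      have := hm.orderParam_eq
      omega
    calc 2 * (blockCount m ^ 2 * blockSize m) + orderParam m
        = blockCount m * (2 * (blockCount m * blockSize m)) + orderParam m := by ring
      _ ≤ blockCount m * orderParam m + orderParam m := by gcongr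
      _ = 2 * (minDegreeParam m * orderParam m) := by rw [← mul_assoc, ← hd]; ring
      _ ≤ 2 * m := by gcongr; exact hm.minDegreeParam_mul_orderParam_le
  have hgl : padding m * minDegreeParam m ≤ 2 * m.sqrt * minDegreeParam m := by
    have := hm.padding_mem_Ioo.2
    gcongr
    omega
  have hrest : 2 * (cycleLengthParam m * minDegreeParam m ^ 2 +
      (padding m * minDegreeParam m + maxDegreeParam m)) ≤
        100 * (m.sqrt * minDegreeParam m ^ 2) := by
    have hk : m.sqrt ≤ m.sqrt * minDegreeParam m ^ 2 := Nat.le_mul_of_pos_right _ (pow_pos hl 2)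
    have hkl : m.sqrt * minDegreeParam m ≤ m.sqrt * minDegreeParam m ^ 2 :=
      Nat.mul_le_mul_left _ (Nat.le_self_pow two_ne_zero _)
    have hl2 : minDegreeParam m ^ 2 ≤ m.sqrt * minDegreeParam m ^ 2 :=
      Nat.le_mul_of_pos_left _ (by omega)
    rw [mul_assoc] at hgl
    rw [cycleLengthParam, add_mul, mul_assoc]
    omega
  omega

theorem factorial_pow_le_ncard_hasProfile :
    (blockSize m).factorial ^ blockCount m ^ 2 ≤
      {G : SimpleGraph (Fin (orderParam m)) |
        HasProfile m (cycleLengthParam m) (maxDegreeParam m) (minDegreeParam m) G}.ncard := by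
  have hl := hm.minDegreeParam_pos
  have hd := hm.blockCount_add_one
  have hlk := hm.hundred_mul_minDegreeParam_le_sqrt
  have hh := (maxDegreeParam_mem_Icc m).1
  exact _root_.factorial_pow_le_ncard_hasProfile hl (by omega) (by omega)
    hm.blockCount_add_padding_le_maxDegreeParam hm.maxDegreeParam_le_blockCount_mul_blockSize
    hm.edge_count_le hm.le_edge_count hm.orderParam_eq

theorem two_mul_blockCount_mul_blockSize_ge :
    m / Real.log m * (1 - 1 / (10 * Real.log m)) ≤ 2 * (blockCount m * blockSize m) := by
  set y := Real.log m
  set w := √(m : ℝ)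
  have hy : 10 ≤ y := hm.ten_le_log
  have hn : m / y < orderParam m + 1 := Nat.lt_floor_add_one _
  have hsum : (2 * m.sqrt + 3 : ℝ) * minDegreeParam m + 2 * (blockCount m * blockSize m) +
      padding m = orderParam m := mod_cast hm.orderParam_eq
  have hg : (padding m : ℝ) + 1 ≤ m.sqrt + 4 * minDegreeParam m := by
    have := hm.padding_mem_Ioo.2
    have := hm.blockCount_add_one
    exact_mod_cast (by omega : padding m + 1 ≤ m.sqrt + 4 * minDegreeParam m)
  have hkw : (m.sqrt : ℝ) ≤ w := Real.nat_sqrt_le_real_sqrt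
  have hkl : (m.sqrt : ℝ) * minDegreeParam m ≤ w * y :=
    mul_le_mul hkw hm.minDegreeParam_le (Nat.cast_nonneg _) (Real.sqrt_nonneg _)
  have hy4 : y ≤ y ^ 4 := le_self_pow₀ (by linarith) (by norm_num)
  have hyw : y ≤ w := by linarith [hm.log_pow_four_le_sqrt]
  have herror : 10 * (w * y) ≤ m / (10 * y ^ 2) := by
    rw [le_div_iff₀ (by positivity)]
    nlinarith [hm.sqrt_mul_log_pow_le, mul_le_mul_of_nonneg_left hy (by positivity : 0 ≤ w * y ^ 3)]
  calc m / y * (1 - 1 / (10 * y)) = m / y - m / (10 * y ^ 2) := by field_simp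
    _ ≤ m / y - 10 * (w * y) := by linarith
    _ ≤ 2 * (blockCount m * blockSize m) := by nlinarith [hm.minDegreeParam_le]

theorem log_sub_log_log_le_log_blockSize :
    Real.log m - 3 * Real.log (Real.log m) ≤ Real.log (blockSize m) - 1 := by
  have hy := hm.ten_le_log
  have hm0 : (0 : ℝ) < m := Nat.cast_pos.2 hm.pos
  have hd : (blockCount m : ℝ) ≤ 2 * Real.log m := by
    have : (blockCount m : ℝ) + 1 = 2 * minDegreeParam m := mod_cast hm.blockCount_add_one
    linarith [hm.minDegreeParam_le]
  have hsize : m / (8 * Real.log m ^ 2) ≤ blockSize m := by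
    have hhalf : (1 / 2 : ℝ) ≤ 1 - 1 / (10 * Real.log m) := by
      rw [le_sub_comm, div_le_iff₀ (by positivity)]
      linarith
    have := calc m / Real.log m * (1 / 2)
          ≤ m / Real.log m * (1 - 1 / (10 * Real.log m)) := by gcongr
      _ ≤ 2 * (blockCount m * blockSize m) := hm.two_mul_blockCount_mul_blockSize_ge
      _ ≤ 2 * (2 * Real.log m * blockSize m) := by gcongr
    calc m / (8 * Real.log m ^ 2) = m / Real.log m * (1 / 2) / (4 * Real.log m) := by
          field_simp; norm_num
      _ ≤ blockSize m := by rw [div_le_iff₀ (by positivity)]; linarith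
  have hlog := Real.log_le_log (by positivity) hsize
  rw [Real.log_div (by positivity) (by positivity), Real.log_mul (by norm_num) (by positivity),
    Real.log_pow, Nat.cast_ofNat] at hlog
  linarith [Real.log_le_sub_one_of_pos (by norm_num : (0 : ℝ) < 8), hm.ten_le_log_log]

theorem sub_two_mul_div_log_le_blockCount_sq_mul_blockSize :
    m - 2 * (m / Real.log m) ≤ (blockCount m : ℝ) ^ 2 * blockSize m := by
  have hy := hm.ten_le_log
  have hd : 2 * Real.log m - 3 ≤ (blockCount m : ℝ) := by
    have : (blockCount m : ℝ) + 1 = 2 * minDegreeParam m := mod_cast hm.blockCount_add_one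
    have hl : Real.log m < minDegreeParam m + 1 := Nat.lt_floor_add_one _
    linarith
  have hnonneg : 0 ≤ 1 - 1 / (10 * Real.log m) := by
    rw [sub_nonneg, div_le_one (by positivity)]
    linarith
  have := calc (2 * Real.log m - 3) * (m / Real.log m * (1 - 1 / (10 * Real.log m)))
      ≤ blockCount m * (2 * (blockCount m * blockSize m)) :=
        mul_le_mul hd hm.two_mul_blockCount_mul_blockSize_ge (by positivity) (Nat.cast_nonneg _)
    _ = 2 * ((blockCount m : ℝ) ^ 2 * blockSize m) := by ring
  have hexpand : (2 * Real.log m - 3) * (m / Real.log m * (1 - 1 / (10 * Real.log m))) =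
      2 * m - 3.2 * (m / Real.log m) + 0.3 * (m / Real.log m ^ 2) := by
    field_simp
    ring
  have hterm : 0 ≤ m / Real.log m ^ 2 := by positivity
  have hterm' : 0 ≤ m / Real.log m := by positivity
  linarith

theorem ten_mul_orderParam_le : 10 * (orderParam m : ℝ) ≤ m := by
  nlinarith [hm.orderParam_mul_log_le, hm.ten_le_log, (Nat.cast_nonneg _ : (0 : ℝ) ≤ orderParam m)]

theorem log_factorial_orderParam_le : Real.log (orderParam m).factorial ≤ m := by
  have hnm : (orderParam m : ℝ) ≤ m := by
    linarith [hm.ten_mul_orderParam_le, (Nat.cast_nonneg _ : (0 : ℝ) ≤ orderParam m)]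
  have hpow : ((orderParam m).factorial : ℝ) ≤ (m : ℝ) ^ orderParam m :=
    (mod_cast (orderParam m).factorial_le_pow :
      ((orderParam m).factorial : ℝ) ≤ (orderParam m : ℝ) ^ orderParam m).trans (by gcongr)
  calc Real.log (orderParam m).factorial ≤ Real.log ((m : ℝ) ^ orderParam m) :=
        Real.log_le_log (by positivity) hpow
    _ = orderParam m * Real.log m := Real.log_pow _ _
    _ ≤ m := hm.orderParam_mul_log_le

theorem le_blockCount_sq_mul_log_factorial_blockSize :
    m * Real.log m - 9 * m * Real.log (Real.log m) ≤
      (blockCount m : ℝ) ^ 2 * Real.log (blockSize m).factorial := by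
  set y := Real.log m
  set z := Real.log y
  have hz : 10 ≤ z := hm.ten_le_log_log
  have hy : 0 < y := hm.log_pos
  have hyz : 0 ≤ y - 3 * z := by linarith [hm.three_mul_log_log_le_log]
  calc m * y - 9 * m * z ≤ (m - 2 * (m / y)) * (y - 3 * z) := by
        have hexpand : (m - 2 * (m / y)) * (y - 3 * z) =
            m * y - 2 * m - 3 * m * z + 6 * (m / y * z) := by
          field_simp
          ring
        have hmy : 0 ≤ m / y * z := by positivity
        nlinarith [(Nat.cast_nonneg m : (0 : ℝ) ≤ m)]
    _ ≤ (blockCount m : ℝ) ^ 2 * blockSize m * (Real.log (blockSize m) - 1) :=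
        mul_le_mul hm.sub_two_mul_div_log_le_blockCount_sq_mul_blockSize
          hm.log_sub_log_log_le_log_blockSize hyz (by positivity)
    _ = (blockCount m : ℝ) ^ 2 * (blockSize m * (Real.log (blockSize m) - 1)) := mul_assoc _ _ _
    _ ≤ (blockCount m : ℝ) ^ 2 * Real.log (blockSize m).factorial := by
        gcongr
        exact mul_log_sub_one_le_log_factorial _

theorem exp_mul_factorial_orderParam_le :
    Real.exp (m * Real.log m - 10 * m * Real.log (Real.log m)) * (orderParam m).factorial ≤
      (blockSize m).factorial ^ blockCount m ^ 2 := by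
  have hn : (0 : ℝ) < (orderParam m).factorial := by positivity
  rw [← Real.log_le_log_iff (by positivity) (by positivity),
    Real.log_mul (Real.exp_ne_zero _) hn.ne', Real.log_exp, Real.log_pow, Nat.cast_pow]
  nlinarith [hm.log_factorial_orderParam_le, hm.le_blockCount_sq_mul_log_factorial_blockSize,
    hm.ten_le_log_log, (Nat.cast_nonneg m : (0 : ℝ) ≤ m)]

theorem choose_card_sym2_le_exp :
    ((Fintype.card (Sym2 (Fin (orderParam m)))).choose m : ℝ) ≤ Real.exp (m * Real.log m) := by
  have hm0 : (0 : ℝ) < m := Nat.cast_pos.2 hm.pos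
  have hpairs : (Fintype.card (Sym2 (Fin (orderParam m))) : ℝ) ≤ (orderParam m : ℝ) ^ 2 := by
    have : Fintype.card (Sym2 (Fin (orderParam m))) ≤ Fintype.card (Fin _ × Fin _) :=
      Fintype.card_le_of_surjective _ Sym2.mk_surjective
    rw [Fintype.card_prod, Fintype.card_fin, ← sq] at this
    exact_mod_cast this
  have hbase : Real.exp 1 * Fintype.card (Sym2 (Fin (orderParam m))) / m ≤ m := by
    rw [div_le_iff₀ hm0]
    calc Real.exp 1 * Fintype.card (Sym2 (Fin (orderParam m)))
        ≤ 100 * (orderParam m : ℝ) ^ 2 := by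
          gcongr
          linarith [Real.exp_one_lt_d9]
      _ = (10 * orderParam m) * (10 * orderParam m) := by ring
      _ ≤ m * m := mul_self_le_mul_self (by positivity) hm.ten_mul_orderParam_le
  calc ((Fintype.card (Sym2 (Fin (orderParam m)))).choose m : ℝ)
      ≤ (Real.exp 1 * Fintype.card (Sym2 (Fin (orderParam m))) / m) ^ m :=
        choose_le_exp_one_mul_div_pow _ m
    _ ≤ (m : ℝ) ^ m := by gcongr
    _ = Real.exp (m * Real.log m) := by rw [Real.exp_nat_mul, Real.exp_log hm0]

end IsLarge

end Parameters

section Antichain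

variable {m m' : ℕ}

/-- The members of the antichain with `m` edges: representatives of the isomorphism classes of
graphs on `orderParam m` vertices with the profile assigned to `m`. -/
def family (m : ℕ) : Set (SimpleGraph (Fin (orderParam m))) :=
  {G ∈ isoReps (Fin (orderParam m)) |
    HasProfile m (cycleLengthParam m) (maxDegreeParam m) (minDegreeParam m) G}

/-- The antichain: the union of all families, with each graph tagged by its number of vertices. -/
def antichain : Set ((n : ℕ) × SimpleGraph (Fin n)) :=
  ⋃ m, Sigma.mk (orderParam m) '' family m

theorem eq_of_mem_family_of_isContained {G : SimpleGraph (Fin (orderParam m))}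
    {H : SimpleGraph (Fin (orderParam m'))} (hG : G ∈ family m) (hH : H ∈ family m')
    (hHG : H ⊑ G) : m = m' := by
  have hodd : Odd (cycleLengthParam m') := ⟨m'.sqrt + 1, by unfold cycleLengthParam; ring⟩
  have htwo : 2 ≤ cycleLengthParam m' := by unfold cycleLengthParam; omega
  exact eq_of_cycleLengthParam_le_of_maxDegreeParam_le
    (hG.2.card_edgeSet_le_of_isContained hH.2 hHG)
    (hG.2.oddGirth_le_of_isContained hH.2 hodd htwo hHG)
    (hG.2.maxDegree_le_of_isContained hH.2 hHG)

theorem eq_of_mem_antichain_of_contains {G H : (n : ℕ) × SimpleGraph (Fin n)}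
    (hG : G ∈ antichain) (hH : H ∈ antichain) (h : Contains G.2 H.2) : G = H := by
  obtain ⟨m, G, hGm, rfl⟩ := Set.mem_iUnion.1 hG
  obtain ⟨m', H, hHm, rfl⟩ := Set.mem_iUnion.1 hH
  rw [contains_iff_isContained] at h
  obtain rfl := eq_of_mem_family_of_isContained hGm hHm h
  have hiso : Nonempty (H ≃g G) := nonempty_iso_of_isContained_of_card_le h le_rfl
    (hGm.2.card_edgeSet.trans hHm.2.card_edgeSet.symm).le
  rw [eq_of_mem_isoReps_of_nonempty_iso hHm.1 hGm.1 hiso]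

theorem setOf_mem_antichain_card_edgeSet_eq (m : ℕ) :
    {G ∈ antichain | Nat.card G.2.edgeSet = m} = Sigma.mk (orderParam m) '' family m := by
  ext G
  constructor
  · rintro ⟨hG, hm⟩
    obtain ⟨m', G, hGm', rfl⟩ := Set.mem_iUnion.1 hG
    obtain rfl : m' = m := hGm'.2.card_edgeSet.symm.trans hm
    exact ⟨G, hGm', rfl⟩
  · rintro ⟨G, hG, rfl⟩
    exact ⟨Set.mem_iUnion.2 ⟨m, G, hG, rfl⟩, hG.2.card_edgeSet⟩

theorem card_setOf_mem_antichain_card_edgeSet_eq (m : ℕ) :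
    Nat.card {G ∈ antichain | Nat.card G.2.edgeSet = m} = (family m).ncard := by
  rw [setOf_mem_antichain_card_edgeSet_eq]
  exact Set.ncard_image_of_injective _ sigma_mk_injective

theorem ncard_family_le_choose (m : ℕ) :
    (family m).ncard ≤ (Fintype.card (Sym2 (Fin (orderParam m)))).choose m :=
  (Set.ncard_le_ncard fun _ hG => hG.2.card_edgeSet).trans (ncard_setOf_card_edgeSet_eq_le _ m)

theorem abs_orderParam_sub_le (m : ℕ) : |(orderParam m : ℝ) - m / Real.log m| ≤ 1 := by
  have hle : (orderParam m : ℝ) ≤ m / Real.log m := Nat.floor_le (by positivity)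
  have hlt : m / Real.log m < orderParam m + 1 := Nat.lt_floor_add_one _
  rw [abs_le]
  constructor <;> linarith

theorem IsLarge.max_one_log_div_ten_le (hm : IsLarge m) :
    max 1 (Real.log m / 10) ≤ minDegreeParam m := by
  have hlt : Real.log m < minDegreeParam m + 1 := Nat.lt_floor_add_one _
  have hlog := hm.ten_le_log
  exact max_le (by linarith) (by linarith)

theorem IsLarge.exp_le_ncard_family (hm : IsLarge m) :
    Real.exp (m * Real.log m - 10 * m * Real.log (Real.log m)) ≤ (family m).ncard := by
  have hcount : (blockSize m).factorial ^ blockCount m ^ 2 ≤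
      (family m).ncard * (orderParam m).factorial := by
    have hiso := ncard_le_ncard_isoReps_mul_factorial (V := Fin (orderParam m))
      (p := HasProfile m (cycleLengthParam m) (maxDegreeParam m) (minDegreeParam m))
      fun _ _ ⟨e⟩ hG => hG.of_iso e
    rw [Fintype.card_fin] at hiso
    exact hm.factorial_pow_le_ncard_hasProfile.trans hiso
  refine le_of_mul_le_mul_right (hm.exp_mul_factorial_orderParam_le.trans ?_)
    (Nat.cast_pos.2 (orderParam m).factorial_pos)
  exact_mod_cast hcount

end Antichain

/-- There is an antichain `𝒜` of (pairwise non-isomorphic) finite graphs and a constant `C > 0`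
such that for all sufficiently large `m`, the number of members of `𝒜` with `m` edges is between
`exp(m log m - C m log log m)` and `exp(m log m + C m log log m)`, every member with `m` edges has
`m / log m + O(1)` vertices, and every member with `m` edges has minimum degree at least
`max 1 (log m / C)`. -/
theorem stmt1 :
    ∃ (𝒜 : Set ((n : ℕ) × SimpleGraph (Fin n))) (C : ℝ), 0 < C ∧
      (∀ G ∈ 𝒜, ∀ H ∈ 𝒜, G ≠ H → ¬ Nonempty (G.2 ≃g H.2)) ∧
      (∀ G ∈ 𝒜, ∀ H ∈ 𝒜, Contains G.2 H.2 → G = H) ∧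
      ∀ᶠ m : ℕ in atTop,
        (Real.exp (m * Real.log m - C * m * Real.log (Real.log m)) ≤
            (Nat.card {G ∈ 𝒜 | Nat.card G.2.edgeSet = m} : ℝ)) ∧
        ((Nat.card {G ∈ 𝒜 | Nat.card G.2.edgeSet = m} : ℝ) ≤
            Real.exp (m * Real.log m + C * m * Real.log (Real.log m))) ∧
        (∀ G ∈ 𝒜, Nat.card G.2.edgeSet = m →
          |(G.1 : ℝ) - m / Real.log m| ≤ C ∧
          ∀ v : Fin G.1, max 1 (Real.log m / C) ≤ (Nat.card (G.2.neighborSet v) : ℝ)) := by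
  refine ⟨antichain, 10, by norm_num, ?_,
    fun G hG H hH => eq_of_mem_antichain_of_contains hG hH, ?_⟩
  · rintro G hG H hH hne ⟨e⟩
    exact hne (eq_of_mem_antichain_of_contains hG hH
      (contains_iff_isContained.2 ⟨e.symm.toCopy⟩))
  filter_upwards [eventually_isLarge] with m hm
  rw [card_setOf_mem_antichain_card_edgeSet_eq]
  refine ⟨hm.exp_le_ncard_family, ?_, fun G hG hGm => ?_⟩
  · calc ((family m).ncard : ℝ)
        ≤ ((Fintype.card (Sym2 (Fin (orderParam m)))).choose m : ℝ) := by
          exact_mod_cast ncard_family_le_choose m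
      _ ≤ Real.exp (m * Real.log m) := hm.choose_card_sym2_le_exp
      _ ≤ Real.exp (m * Real.log m + 10 * m * Real.log (Real.log m)) := by
          have := hm.ten_le_log_log
          gcongr
          exact le_add_of_nonneg_right (by positivity)
  · obtain ⟨G, hGf, rfl⟩ := (setOf_mem_antichain_card_edgeSet_eq m).subset ⟨hG, hGm⟩
    refine ⟨(abs_orderParam_sub_le m).trans (by norm_num), fun v => ?_⟩
    exact hm.max_one_log_div_ten_le.trans (Nat.cast_le.2 (hGf.2.le_card_neighborSet v))
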